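/- Let j ≥ 2. In W = Λ^{2j} ℚ^{4j−1} with the permutation action of S_{4j−1} and the submodule K generated by ρ, for every 1 ≤ i ≤ 2j−2 the vector (−1)^{i−1} e_1 ∧ e_2 ∧ e_3 ∧ S_i − e_1 ∧ e_2 ∧ e_3 ∧ S_1 lies in K. -/

import Mathlib

set_option synthInstance.maxHeartbeats 1000000
set_option maxHeartbeats 1000000

noncomputable section

open ExteriorAlgebra

/-- The standard basis vector `e_{m+1}` of `ℚ^{4j−1}` (with `0`-based index `m`). -/
def ε (j : ℕ) (m : Fin (4*j-1)) : Fin (4*j-1) → ℚ := Pi.single m 1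

/-- The action of `S_N` on the exterior algebra of `ℚ^N` induced by permuting the standard
basis vectors (`g` sends `e_m` to `e_{g m}`). -/
def pact (N : ℕ) (g : Equiv.Perm (Fin N)) :
    ExteriorAlgebra ℚ (Fin N → ℚ) →ₗ[ℚ] ExteriorAlgebra ℚ (Fin N → ℚ) :=
  (ExteriorAlgebra.map (LinearMap.funLeft ℚ ℚ ⇑g⁻¹)).toLinearMap

/-- The element of the `i`-th loop `B_i = {2i+2, 2i+3}` (1-indexed; here `i` is `0`-based)
selected by the Boolean `b`. -/
def idx (j : ℕ) (k : Fin (2*j-2)) (b : Bool) : Fin (4*j-1) :=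
  ⟨2*(k : ℕ) + 3 + b.toNat, by have := Bool.toNat_lt b; omega⟩

/-- `S_I`: the sum, over all choices of one element `s_i ∈ B_i` for each loop `i ∉ I`, of the
wedge products `e_{s_{i_1}} ∧ ⋯ ∧ e_{s_{i_m}}` taken in increasing order of the loop indices
`i ∉ I`. -/
def SI (j : ℕ) (I : Finset (Fin (2*j-2))) : ExteriorAlgebra ℚ (Fin (4*j-1) → ℚ) :=
  ∑ c ∈ Finset.univ.filter (fun c : Fin (2*j-2) → Bool => ∀ i ∈ I, c i = false),
    (List.ofFn fun k : Fin (2*j-2) =>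
      if k ∈ I then 1 else ExteriorAlgebra.ι ℚ (ε j (idx j k (c k)))).prod

/-- The wedge `e_{2j} ∧ e_{2j+1} ∧ ⋯ ∧ e_{4j−1}`. -/
def ρbase (j : ℕ) : ExteriorAlgebra ℚ (Fin (4*j-1) → ℚ) :=
  (List.ofFn fun k : Fin (2*j) =>
    ExteriorAlgebra.ι ℚ (ε j ⟨2*j - 1 + (k : ℕ), by omega⟩)).prod

/-- `ρ = (1 + ∑_{i=1}^{2j−1} (i 2j)) · (e_{2j} ∧ e_{2j+1} ∧ ⋯ ∧ e_{4j−1})`. -/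
def ρElt (j : ℕ) : ExteriorAlgebra ℚ (Fin (4*j-1) → ℚ) :=
  ρbase j + ∑ m : Fin (2*j-1),
    pact (4*j-1) (Equiv.swap (⟨(m : ℕ), by omega⟩ : Fin (4*j-1)) ⟨2*j - 1, by have := m.isLt; omega⟩) (ρbase j)

/-- `K`: the `ℚ[S_{4j−1}]`-submodule of `W = Λ^{2j} ℚ^{4j−1}` generated by `ρ`, i.e. the span
of the `S_{4j−1}`-orbit of `ρ`. -/
def Ksub (j : ℕ) : Submodule ℚ (ExteriorAlgebra ℚ (Fin (4*j-1) → ℚ)) :=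
  Submodule.span ℚ (Set.range fun g : Equiv.Perm (Fin (4*j-1)) => pact (4*j-1) g (ρElt j))

end

noncomputable section

/-- `e_{m+1}` as an element of the exterior algebra. -/
def E (j : ℕ) (m : Fin (4*j-1)) : ExteriorAlgebra ℚ (Fin (4*j-1) → ℚ) :=
  ExteriorAlgebra.ι ℚ (ε j m)

end

/-!
Write `σ = e₁ + ⋯ + e_{4j−1}`, the constant function `1`. The transposition `(i 2j)` replaces the
first factor of `e_{2j} ∧ T`, where `T = e_{2j+1} ∧ ⋯ ∧ e_{4j−1}`, by `e_i`, and `e_i ∧ T = 0` for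
`i > 2j`; hence `ρ = σ ∧ T`. As `σ` is invariant and the orbit of `T` contains every
wedge of `2j − 1` distinct basis vectors, `K = σ ∧ Λ^{2j−1} ℚ^{4j−1}`.

The vector `σ` is also the sum of the family `v = (e₁, e₂, e₃, b₁, …, b_{2j−2})`, where `b_k` is the
sum of the two basis vectors of the loop `B_k`, and by multilinearity `e₁ ∧ e₂ ∧ e₃ ∧ S_I` is the
wedge of `v` with the `b_k`, `k ∈ I`, omitted. Multiplying the wedge of `v` without its entries `l`
and `i` by `σ`, only the terms in which one of the two omitted entries is restored survive.
-/

section OrderedProducts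

open Finset Function

theorem mul_prod_ofFn_eq_smul_update {R A : Type*} [CommMonoid R] [Monoid A] [MulAction R A]
    [IsScalarTower R A A] [SMulCommClass R A A] (a : A) {n : ℕ} (x : Fin n → A) (s : Fin n → R)
    (i : Fin n) (h : ∀ k < i, a * x k = s k • (x k * a)) :
    a * (List.ofFn x).prod = (∏ k ∈ Iio i, s k) • (List.ofFn (update x i (a * x i))).prod := by
  induction n with
  | zero => exact i.elim0
  | succ n ih =>
    simp only [List.ofFn_succ, List.prod_cons]
    cases i using Fin.cases with
    | zero =>
      have Iio_zero : Iio (0 : Fin (n + 1)) = ∅ := Iio_bot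
      simp [← mul_assoc, Iio_zero]
    | succ i =>
      have ih' := ih (fun k => x k.succ) (fun k => s k.succ) i
        fun k hk => h _ (Fin.succ_lt_succ_iff.2 hk)
      have tail_update : (fun k : Fin n => update x i.succ (a * x i.succ) k.succ) =
          update (fun k => x k.succ) i (a * x i.succ) := by
        ext k; simp [update_apply]
      have prod_Iio_succ : ∏ k ∈ Iio i.succ, s k = s 0 * ∏ k ∈ Iio i, s k.succ := by
        simp only [← filter_gt_eq_Iio, prod_filter, Fin.prod_univ_succ, Fin.succ_pos, if_true,
          Fin.succ_lt_succ_iff]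
      rw [← mul_assoc, h 0 i.succ_pos, smul_mul_assoc, mul_assoc, ih', mul_smul_comm, smul_smul,
        tail_update, prod_Iio_succ, update_of_ne (Fin.succ_ne_zero i).symm]

theorem prod_ofFn_sum {A β : Type*} [Semiring A] {n : ℕ} (s : Fin n → Finset β)
    (f : Fin n → β → A) :
    (List.ofFn fun k => ∑ b ∈ s k, f k b).prod =
      ∑ c ∈ Fintype.piFinset s, (List.ofFn fun k => f k (c k)).prod := by
  simpa only [MultilinearMap.mkPiAlgebraFin_apply] using
    (MultilinearMap.mkPiAlgebraFin ℕ n A).map_sum_finset f s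

end OrderedProducts

section ExteriorAlgebra

open Finset Function ExteriorAlgebra

variable (R : Type*) {M : Type*} [CommRing R] [AddCommGroup M] [Module R M]

theorem span_range_ιMulti_comp_perm {α : Type*} {n : ℕ} {v : α → M}
    (hv : Submodule.span R (Set.range v) = ⊤) (a : Fin n ↪ α) :
    Submodule.span R (Set.range fun g : Equiv.Perm α => ιMulti R n (v ∘ g ∘ a)) = ⋀[R]^n M := by
  apply le_antisymm
  · rw [Submodule.span_le, Set.range_subset_iff]
    exact fun g => ιMulti_range R n ⟨_, rfl⟩
  · rw [← exteriorPower.ιMulti_span_fixedDegree_of_span_eq_top R n M hv, Submodule.span_le]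
    rintro _ ⟨w, hw, rfl⟩
    obtain ⟨f, rfl⟩ := Set.range_subset_range_iff_exists_comp.mp hw
    by_cases hf : Injective f
    · obtain ⟨g, hg⟩ := Equiv.Perm.exists_smul_eq_embedding a ⟨f, hf⟩
      have hgf : ⇑g ∘ a = f := congrArg DFunLike.coe hg
      exact Submodule.subset_span ⟨g, congrArg (fun u => ιMulti R n (v ∘ u)) hgf⟩
    · rw [ιMulti_eq_zero_of_not_inj fun h => hf h.of_comp]
      exact zero_mem _

variable {n : ℕ} (v : Fin n → M) (I : Finset (Fin n))

/-- The wedge `v_{k_1} ∧ ⋯ ∧ v_{k_m}` over the indices `k_1 < ⋯ < k_m` outside `I`. As in `SI`, the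
omitted factors are replaced by `1`. -/
noncomputable def wedgeOmit : ExteriorAlgebra R M :=
  (List.ofFn fun k => if k ∈ I then 1 else ι R (v k)).prod

theorem wedgeOmit_mem_exteriorPower : wedgeOmit R v I ∈ ⋀[R]^(n - #I) M := by
  have h := SetLike.list_prod_ofFn_mem_graded (A := fun d => ⋀[R]^d M)
    (fun k => if k ∈ I then 0 else 1) (fun k => if k ∈ I then 1 else ι R (v k))
    fun k => by split_ifs <;> simp
  have degree : (List.ofFn fun k => if k ∈ I then 0 else 1).sum = n - #I := by
    rw [List.sum_ofFn, sum_ite, sum_const_zero, zero_add, ← card_eq_sum_ones,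
      filter_notMem_eq_sdiff, ← compl_eq_univ_sdiff, card_compl, Fintype.card_fin]
  rwa [degree] at h

theorem ι_mul_wedgeOmit_eq_smul_update (k : Fin n) :
    ι R (v k) * wedgeOmit R v I = (-1 : R) ^ #(Iio k \ I) •
      (List.ofFn (update (fun l => if l ∈ I then 1 else ι R (v l)) k
        (ι R (v k) * if k ∈ I then 1 else ι R (v k)))).prod := by
  rw [wedgeOmit, mul_prod_ofFn_eq_smul_update _ _ (fun l => if l ∈ I then (1 : R) else -1)]
  · congr 1
    rw [prod_ite, prod_const_one, one_mul, prod_const, filter_notMem_eq_sdiff]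
  · intro l _
    split_ifs
    · simp
    · simpa using eq_neg_of_add_eq_zero_left (ι_add_mul_swap (v k) (v l))

variable {I} in
theorem ι_mul_wedgeOmit_of_mem {k : Fin n} (hk : k ∈ I) :
    ι R (v k) * wedgeOmit R v I = (-1 : R) ^ #(Iio k \ I) • wedgeOmit R v (I.erase k) := by
  rw [ι_mul_wedgeOmit_eq_smul_update, wedgeOmit]
  congr 3
  ext l
  rcases eq_or_ne l k with rfl | hl <;> simp [*]

variable {I} in
theorem ι_mul_wedgeOmit_of_notMem {k : Fin n} (hk : k ∉ I) :
    ι R (v k) * wedgeOmit R v I = 0 := by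
  rw [ι_mul_wedgeOmit_eq_smul_update, if_neg hk, ι_sq_zero,
    List.prod_eq_zero (List.mem_ofFn.2 ⟨k, update_self ..⟩), smul_zero]

theorem ι_sum_mul_wedgeOmit :
    ι R (∑ k, v k) * wedgeOmit R v I =
      ∑ k ∈ I, (-1 : R) ^ #(Iio k \ I) • wedgeOmit R v (I.erase k) := by
  rw [map_sum, sum_mul, ← sum_subset (subset_univ I)
    fun k _ hk => ι_mul_wedgeOmit_of_notMem R v hk]
  exact sum_congr rfl fun k hk => ι_mul_wedgeOmit_of_mem R v hk

theorem ι_sum_mul_wedgeOmit_pair {l i : Fin n} (hli : l < i) :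
    ι R (∑ k, v k) * wedgeOmit R v {l, i} =
      (-1 : R) ^ (l : ℕ) • wedgeOmit R v {i} - (-1 : R) ^ (i : ℕ) • wedgeOmit R v {l} := by
  have card_l : #(Iio l \ {l, i}) = l := by
    rw [sdiff_eq_self_of_disjoint, Fin.card_Iio]
    simp [hli.le]
  have card_i : #(Iio i \ {l, i}) + 1 = i := by
    have sdiff_eq : Iio i \ {l, i} = (Iio i).erase l := by grind
    rw [sdiff_eq, card_erase_add_one (by simpa), Fin.card_Iio]
  have erase_l : ({l, i} : Finset (Fin n)).erase l = {i} := by grind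
  have erase_i : ({l, i} : Finset (Fin n)).erase i = {l} := by grind
  rw [ι_sum_mul_wedgeOmit, sum_pair hli.ne, card_l, erase_l, erase_i, ← card_i, pow_succ]
  simp

theorem smul_wedgeOmit_sub_smul_wedgeOmit_mem (i l : Fin n) :
    (-1 : R) ^ (i : ℕ) • wedgeOmit R v {i} - (-1 : R) ^ (l : ℕ) • wedgeOmit R v {l} ∈
      (⋀[R]^(n - 2) M).map (LinearMap.mulLeft R (ι R (∑ k, v k))) := by
  wlog hli : l < i generalizing i l
  · rcases (not_lt.1 hli).eq_or_lt with rfl | hil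
    · simp
    · rw [← neg_sub]
      exact neg_mem (this l i hil)
  have hmem := wedgeOmit_mem_exteriorPower R v {l, i}
  rw [card_pair hli.ne] at hmem
  refine ⟨(-1 : R) ^ (i + l : ℕ) • wedgeOmit R v {l, i}, Submodule.smul_mem _ _ hmem, ?_⟩
  rw [LinearMap.mulLeft_apply, mul_smul_comm, ι_sum_mul_wedgeOmit_pair R v hli, smul_sub, smul_smul,
    smul_smul]
  congr 2
  · rw [pow_add, mul_assoc, ← mul_pow]; simp
  · rw [pow_add, mul_right_comm, ← mul_pow]; simp

theorem wedgeOmit_append_map_natAddEmb {m : ℕ} (u : Fin m → M) :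
    wedgeOmit R (Fin.append u v) (I.map (Fin.natAddEmb m)) = ιMulti R m u * wedgeOmit R v I := by
  have factors : (fun k => if k ∈ I.map (Fin.natAddEmb m) then 1 else ι R (Fin.append u v k)) =
      Fin.append (fun k => ι R (u k)) fun k => if k ∈ I then 1 else ι R (v k) := by
    ext k
    cases k using Fin.addCases with
    | left k =>
      have natAdd_ne (i : Fin n) : Fin.natAdd m i ≠ k.castAdd n := by
        simp only [ne_eq, Fin.ext_iff, Fin.val_natAdd, Fin.val_castAdd]
        omega
      simp [natAdd_ne]
    | right k => simp
  rw [wedgeOmit, factors, List.ofFn_fin_append, List.prod_append, ιMulti_apply, wedgeOmit]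

end ExteriorAlgebra

section PermutationAction

open ExteriorAlgebra

variable {N : ℕ} (g : Equiv.Perm (Fin N))

theorem pact_mul (x y : ExteriorAlgebra ℚ (Fin N → ℚ)) :
    pact N g (x * y) = pact N g x * pact N g y :=
  map_mul (ExteriorAlgebra.map _) x y

theorem pact_ι (x : Fin N → ℚ) : pact N g (ι ℚ x) = ι ℚ (x ∘ ⇑g⁻¹) :=
  map_apply_ι _ x

theorem pact_ιMulti {n : ℕ} (x : Fin n → Fin N → ℚ) :
    pact N g (ιMulti ℚ n x) = ιMulti ℚ n fun k => x k ∘ ⇑g⁻¹ :=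
  map_apply_ιMulti _ x

end PermutationAction

section Generator

open ExteriorAlgebra

variable {j : ℕ}

theorem ε_comp_inv (g : Equiv.Perm (Fin (4 * j - 1))) (m : Fin (4 * j - 1)) :
    ε j m ∘ ⇑g⁻¹ = ε j (g m) := by
  ext x
  simp only [Function.comp_apply, ε, Pi.single_apply, Equiv.Perm.inv_eq_iff_eq]

theorem sum_ε : ∑ m, ε j m = 1 :=
  Finset.univ_sum_single (1 : Fin (4 * j - 1) → ℚ)

theorem span_range_ε : Submodule.span ℚ (Set.range (ε j)) = ⊤ := by
  have ε_eq : ε j = Pi.basisFun ℚ (Fin (4 * j - 1)) :=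
    funext fun m => (Pi.basisFun_apply ℚ _ m).symm
  rw [ε_eq, Module.Basis.span_eq]

/-- The `0`-based position of the `(k+1)`-st factor of `e_{2j+1} ∧ ⋯ ∧ e_{4j−1}`, the wedge that
remains when the first factor of `ρbase j` is removed. -/
def tailIdx (j : ℕ) : Fin (2 * j - 1) ↪ Fin (4 * j - 1) where
  toFun k := ⟨2 * j + k, by omega⟩
  inj' k l h := by simpa [Fin.ext_iff] using h

theorem val_tailIdx (k : Fin (2 * j - 1)) : (tailIdx j k : ℕ) = 2 * j + k :=
  rfl

theorem ρbase_eq_ι_mul_ιMulti (hj : 1 ≤ j) :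
    ρbase j = ι ℚ (ε j ⟨2 * j - 1, by omega⟩) * ιMulti ℚ (2 * j - 1) (ε j ∘ tailIdx j) := by
  rw [ρbase, List.ofFn_congr (show 2 * j = 2 * j - 1 + 1 by omega), List.ofFn_succ, List.prod_cons,
    ιMulti_apply]
  congr 5
  ext k : 1
  congr 2
  simp only [Fin.ext_iff, Fin.val_cast, Fin.val_succ, val_tailIdx]
  omega

theorem pact_swap_ρbase (hj : 1 ≤ j) (m : Fin (2 * j - 1)) :
    pact (4 * j - 1) (Equiv.swap ⟨m, by omega⟩ ⟨2 * j - 1, by omega⟩) (ρbase j) =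
      ι ℚ (ε j ⟨m, by omega⟩) * ιMulti ℚ (2 * j - 1) (ε j ∘ tailIdx j) := by
  rw [ρbase_eq_ι_mul_ιMulti hj, pact_mul, pact_ι, pact_ιMulti, ε_comp_inv, Equiv.swap_apply_right]
  congr 2
  ext k : 1
  rw [Function.comp_apply, ε_comp_inv, Equiv.swap_apply_of_ne_of_ne] <;>
    simp only [ne_eq, Fin.ext_iff, val_tailIdx] <;> omega

theorem ρElt_eq_ι_one_mul (hj : 1 ≤ j) :
    ρElt j = ι ℚ 1 * ιMulti ℚ (2 * j - 1) (ε j ∘ tailIdx j) := by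
  have one_eq : 1 = ∑ m : Fin (2 * j - 1), ε j ⟨m, by omega⟩ + ε j ⟨2 * j - 1, by omega⟩ +
      ∑ k, ε j (tailIdx j k) := by
    rw [← sum_ε, ← Fin.sum_congr' _ (show 2 * j - 1 + 1 + (2 * j - 1) = 4 * j - 1 by omega),
      Fin.sum_univ_add, Fin.sum_univ_castSucc]
    congr! 4 with k
    simp only [Fin.ext_iff, Fin.val_cast, Fin.val_natAdd, val_tailIdx]
    omega
  have tail_mul : ι ℚ (∑ k, ε j (tailIdx j k)) *
      ιMulti ℚ (2 * j - 1) (ε j ∘ tailIdx j) = 0 := by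
    rw [map_sum, Finset.sum_mul]
    exact Finset.sum_eq_zero fun k _ => ι_mul_prod_list (ε j ∘ tailIdx j) k
  rw [one_eq, map_add, map_add, map_sum, add_mul, add_mul, tail_mul, add_zero, Finset.sum_mul,
    ← ρbase_eq_ι_mul_ιMulti hj, add_comm, ρElt]
  simp only [pact_swap_ρbase hj]

theorem Ksub_eq_map_mulLeft (hj : 1 ≤ j) :
    Ksub j = (⋀[ℚ]^(2 * j - 1) (Fin (4 * j - 1) → ℚ)).map (LinearMap.mulLeft ℚ (ι ℚ 1)) := by
  have orbit (g : Equiv.Perm (Fin (4 * j - 1))) : pact (4 * j - 1) g (ρElt j) =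
      ι ℚ 1 * ιMulti ℚ (2 * j - 1) (ε j ∘ g ∘ tailIdx j) := by
    rw [ρElt_eq_ι_one_mul hj, pact_mul, pact_ι, pact_ιMulti]
    simp only [Function.comp_apply, ε_comp_inv]
    rfl
  rw [Ksub, ← span_range_ιMulti_comp_perm ℚ span_range_ε (tailIdx j), Submodule.map_span,
    ← Set.range_comp]
  simp only [orbit]
  rfl

end Generator

section Loops

open ExteriorAlgebra

/-- The sum of the two basis vectors of the loop `B_{k+1}` (`k` is `0`-based); `S_I` is the wedge of
these sums over the loops outside `I`. -/
def loopVec (j : ℕ) (k : Fin (2 * j - 2)) : Fin (4 * j - 1) → ℚ := ∑ b, ε j (idx j k b)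

theorem SI_eq_wedgeOmit (j : ℕ) (I : Finset (Fin (2 * j - 2))) :
    SI j I = wedgeOmit ℚ (loopVec j) I := by
  have factor (k : Fin (2 * j - 2)) : (if k ∈ I then 1 else ι ℚ (loopVec j k)) =
      ∑ b ∈ if k ∈ I then {false} else Finset.univ, if k ∈ I then 1 else ι ℚ (ε j (idx j k b)) := by
    split_ifs <;> simp [loopVec]
  have choices : (Finset.univ.filter fun c : Fin (2 * j - 2) → Bool => ∀ i ∈ I, c i = false) =
      Fintype.piFinset fun k => if k ∈ I then {false} else Finset.univ := by
    ext c
    simp only [Finset.mem_filter_univ, Fintype.mem_piFinset]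
    exact forall_congr' fun k => by split_ifs <;> simp [*]
  simp only [SI, wedgeOmit, factor, prod_ofFn_sum, choices]

/-- The family `e₁, e₂, e₃, b₁, …, b_{2j−2}` with `b_{k+1} = loopVec j k`: it sums to `σ`, and its
wedge with some of the `b`s omitted is `e₁ ∧ e₂ ∧ e₃ ∧ S_I`. -/
def blockVec (j : ℕ) (hj : 1 ≤ j) : Fin (3 + (2 * j - 2)) → Fin (4 * j - 1) → ℚ :=
  Fin.append ![ε j ⟨0, by omega⟩, ε j ⟨1, by omega⟩, ε j ⟨2, by omega⟩] (loopVec j)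

theorem sum_blockVec (j : ℕ) (hj : 1 ≤ j) : ∑ k, blockVec j hj k = 1 := by
  have loops : ∑ k, loopVec j k =
      ∑ x : Fin ((2 * j - 2) * 2), ε j ((Fin.natAdd 3 x).cast (by omega)) := by
    rw [← finProdFinEquiv.sum_comp, Fintype.sum_prod_type]
    refine Fintype.sum_congr _ _ fun k => ?_
    rw [loopVec, Fintype.sum_bool, Fin.sum_univ_two, add_comm]
    congr 2 <;>
      simp only [idx, Fin.ext_iff, Fin.val_cast, Fin.val_natAdd, finProdFinEquiv_apply_val,
        Bool.toNat_false, Bool.toNat_true, Fin.val_zero, Fin.val_one] <;>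
      omega
  rw [← sum_ε, ← Fin.sum_congr' _ (show 3 + (2 * j - 2) * 2 = 4 * j - 1 by omega), Fin.sum_univ_add,
    Fin.sum_univ_add, ← loops]
  simp only [blockVec, Fin.append_left, Fin.append_right, Fin.sum_univ_three]
  rfl

theorem wedgeOmit_blockVec_natAdd (j : ℕ) (hj : 1 ≤ j) (i : Fin (2 * j - 2)) :
    wedgeOmit ℚ (blockVec j hj) {Fin.natAdd 3 i} =
      E j ⟨0, by omega⟩ * E j ⟨1, by omega⟩ * E j ⟨2, by omega⟩ * SI j {i} := by
  rw [← Fin.natAddEmb_apply, ← Finset.map_singleton, blockVec, wedgeOmit_append_map_natAddEmb,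
    SI_eq_wedgeOmit]
  simp [E, mul_assoc, Matrix.vecTail]

end Loops

/-- For `j ≥ 2` and every loop index `i` (`1 ≤ i ≤ 2j−2`, here `0`-based), the
vector `(−1)^{i−1} e₁∧e₂∧e₃∧S_i − e₁∧e₂∧e₃∧S₁` lies in `K`. -/
theorem stmt9 (j : ℕ) (hj : 2 ≤ j) (i : Fin (2*j-2)) :
    ((-1 : ℚ)^(i : ℕ)) •
        (E j ⟨0, by omega⟩ * E j ⟨1, by omega⟩ * E j ⟨2, by omega⟩ * SI j {i})
      - E j ⟨0, by omega⟩ * E j ⟨1, by omega⟩ * E j ⟨2, by omega⟩ * SI j {⟨0, by omega⟩}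
      ∈ Ksub j := by
  have hj' : 1 ≤ j := by omega
  have key := smul_wedgeOmit_sub_smul_wedgeOmit_mem ℚ (blockVec j hj') (Fin.natAdd 3 i)
    (Fin.natAdd 3 ⟨0, by omega⟩)
  rw [sum_blockVec, wedgeOmit_blockVec_natAdd, wedgeOmit_blockVec_natAdd,
    show 3 + (2 * j - 2) - 2 = 2 * j - 1 by omega, ← Ksub_eq_map_mulLeft hj'] at key
  convert neg_mem key using 1
  norm_num [pow_add, neg_add_eq_sub]
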